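/- arXiv:1902.08387 — 2 statements merged into one kernel-verified Lean document; each statement's English description precedes it below -/
import Mathlib

section
/- Let ℓ ≥ 2. For every m ≥ 1, the determinism DET_ℓ(ω, m) = RR_ℓ(ω, m)/RR_1(ω, m) exists (where RR_ℓ(ω, m) = lim_{n→∞} [ℓ·C(ω, n, m + ℓ − 1) − (ℓ − 1)·C(ω, n, m + ℓ)] and RR_1(ω, m) = lim_{n→∞} C(ω, n, m) > 0), and DET_ℓ(ω, m) → 1 as m → ∞. -/
/-!
Call `i, j` matching at length `m` when the `m`-words read at positions `i + 1` and `j + 1` agree.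
The sequence vanishes at odd positions and satisfies `ω_{2k} = 1 - ω_k`. Hence for indices of equal
parity, matching at length `m` reduces to matching of the halved indices, at length `⌊m/2⌋` (even
indices) or `⌈m/2⌉` (odd indices). For indices of opposite parity a match forces a block of zeros,
which is impossible once `m ≥ 3` because two consecutive letters are never both `1`.
Counting pairs gives, for `m ≥ 3`, the exact identity
`N(n, m) = N(⌈n/2⌉, ⌊m/2⌋) + N(⌊n/2⌋, ⌈m/2⌉)`, so the limits `c m` of the correlation sums exist and
satisfy `c m = (c ⌊m/2⌋ + c ⌈m/2⌉) / 4`; the cases `m = 1, 2` follow from the letter `1` having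
frequency `1/3`.

The recursion yields `c m ≥ 1 / (2 m)`. The differences `d m = c m - c (m + 1)` satisfy
`d (2 m) = d (2 m + 1) = d m / 4`, so `|d m| ≤ 1 / (m + 1) ^ 2`. Therefore `c (m + 1) / c m → 1`,
hence `c (m + k) / c m → 1` for every fixed `k`, and the determinism tends to `l - (l - 1) = 1`.
-/

open Filter Topology

/-- The period-doubling sequence (1-based): `pd i = k_i mod 2` where `k_i` is the
largest `k` such that `2^k` divides `i`. -/
def pd (i : ℕ) : ℕ := padicValNat 2 i % 2

/-- The `m`-word `w_i^(m) = ω_i ω_{i+1} ⋯ ω_{i+m-1}` of the period-doubling sequence. -/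
def wordAt (i m : ℕ) : List ℕ := (List.range m).map (fun h => pd (i + h))

/-- An `m`-word is allowed if it occurs in the period-doubling sequence. -/
def Allowed (m : ℕ) (v : List ℕ) : Prop := ∃ i, 1 ≤ i ∧ wordAt i m = v

/-- The complexity function of the period-doubling sequence. -/
noncomputable def pdComplexity (m : ℕ) : ℕ := Set.ncard {v | Allowed m v}

/-- `HasFreq m v c`: the frequency of the `m`-word `v` in the period-doubling
sequence exists and equals `c`. -/
def HasFreq (m : ℕ) (v : List ℕ) (c : ℝ) : Prop :=
  Tendsto (fun n : ℕ => (((Finset.Icc 1 n).filter (fun i => wordAt i m = v)).card : ℝ) / n)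
    atTop (𝓝 c)

open Classical in
/-- The correlation sum `C(ω, n, m)` of the period-doubling sequence, for a distance
threshold `ε` with `2^{-m} ≤ ε < 2^{-m+1}`. -/
noncomputable def corrSum (n m : ℕ) : ℝ :=
  (((Finset.range n ×ˢ Finset.range n).filter
      (fun p : ℕ × ℕ => ∀ h ∈ Finset.Icc 1 m, pd (p.1 + h) = pd (p.2 + h))).card : ℝ) / (n : ℝ) ^ 2

/-- The period-doubling substitution `ζ(0) = 01`, `ζ(1) = 00`, extended to a morphism
on finite words. -/
def substWord (w : List ℕ) : List ℕ := (w.map (fun a => if a = 0 then [0, 1] else [0, 0])).flatten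

/-- The period-doubling substitution acting on one-sided infinite sequences
(0-based indexing). -/
def substSeq (x : ℕ → ℕ) : ℕ → ℕ := fun n =>
  if n % 2 = 0 then 0 else if x (n / 2) = 0 then 1 else 0

/-! ### The period-doubling sequence under halving -/

lemma pd_odd (k : ℕ) : pd (2 * k + 1) = 0 := by
  unfold pd
  rw [padicValNat.eq_zero_of_not_dvd (by omega)]

lemma pd_even (k : ℕ) (hk : 1 ≤ k) : pd (2 * k) + pd k = 1 := by
  unfold pd
  rw [padicValNat.mul (by omega) (by omega), padicValNat_self]
  omega

lemma pd_le_one (k : ℕ) : pd k ≤ 1 := by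
  unfold pd
  omega

lemma pd_even_eq_iff (a b : ℕ) (ha : 1 ≤ a) (hb : 1 ≤ b) :
    pd (2 * a) = pd (2 * b) ↔ pd a = pd b := by
  have h1 := pd_even a ha
  have h2 := pd_even b hb
  omega

/-- The `m`-words of the period-doubling sequence at positions `i + 1` and `j + 1` agree. -/
def Match (i j m : ℕ) : Prop := ∀ h ∈ Finset.Icc 1 m, pd (i + h) = pd (j + h)

lemma match_symm (i j m : ℕ) : Match i j m ↔ Match j i m :=
  ⟨fun H h hh => (H h hh).symm, fun H h hh => (H h hh).symm⟩

lemma match_even_even (a b m : ℕ) : Match (2 * a) (2 * b) m ↔ Match a b (m / 2) := by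
  constructor
  · intro H g hg
    rw [Finset.mem_Icc] at hg
    have := H (2 * g) (Finset.mem_Icc.2 (by omega))
    rwa [← mul_add, ← mul_add, pd_even_eq_iff _ _ (by omega) (by omega)] at this
  · intro H h hh
    rw [Finset.mem_Icc] at hh
    obtain ⟨g, rfl | rfl⟩ := h.even_or_odd'
    · rw [← mul_add, ← mul_add, pd_even_eq_iff _ _ (by omega) (by omega)]
      exact H g (Finset.mem_Icc.2 (by omega))
    · rw [← add_assoc, ← add_assoc, ← mul_add, ← mul_add, pd_odd, pd_odd]

lemma match_odd_odd (a b m : ℕ) :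
    Match (2 * a + 1) (2 * b + 1) m ↔ Match a b ((m + 1) / 2) := by
  constructor
  · intro H g hg
    rw [Finset.mem_Icc] at hg
    have := H (2 * g - 1) (Finset.mem_Icc.2 (by omega))
    rwa [show 2 * a + 1 + (2 * g - 1) = 2 * (a + g) by omega,
      show 2 * b + 1 + (2 * g - 1) = 2 * (b + g) by omega,
      pd_even_eq_iff _ _ (by omega) (by omega)] at this
  · intro H h hh
    rw [Finset.mem_Icc] at hh
    obtain ⟨g, rfl | rfl⟩ := h.even_or_odd'
    · rw [show 2 * a + 1 + 2 * g = 2 * (a + g) + 1 by omega,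
        show 2 * b + 1 + 2 * g = 2 * (b + g) + 1 by omega, pd_odd, pd_odd]
    · rw [show 2 * a + 1 + (2 * g + 1) = 2 * (a + (g + 1)) by omega,
        show 2 * b + 1 + (2 * g + 1) = 2 * (b + (g + 1)) by omega,
        pd_even_eq_iff _ _ (by omega) (by omega)]
      exact H (g + 1) (Finset.mem_Icc.2 (by omega))

lemma match_even_odd_two (a b : ℕ) :
    Match (2 * a) (2 * b + 1) 2 ↔ pd (a + 1) = 1 ∧ pd (b + 1) = 1 := by
  have ha := pd_even (a + 1) (by omega)
  have hb := pd_even (b + 1) (by omega)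
  have ha' := pd_odd a
  have hb' := pd_odd (b + 1)
  have key : Match (2 * a) (2 * b + 1) 2 ↔
      pd (2 * a + 1) = pd (2 * (b + 1)) ∧ pd (2 * (a + 1)) = pd (2 * (b + 1) + 1) := by
    constructor
    · intro H
      exact ⟨H 1 (by simp), H 2 (by simp)⟩
    · rintro ⟨h1, h2⟩ h hh
      rw [Finset.mem_Icc] at hh
      obtain rfl | rfl : h = 1 ∨ h = 2 := by omega
      · exact h1
      · exact h2
  rw [key]
  omega

/-- A match at opposite parities would make the letters at `b + 1` and `b + 2` both equal to `1`,
but one of these positions is odd. -/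
lemma not_match_even_odd (a b m : ℕ) (hm : 3 ≤ m) : ¬ Match (2 * a) (2 * b + 1) m := by
  intro H
  have h1 : pd (2 * a + 1) = pd (2 * (b + 1)) := H 1 (Finset.mem_Icc.2 (by omega))
  have h3 : pd (2 * (a + 1) + 1) = pd (2 * (b + 2)) := H 3 (Finset.mem_Icc.2 (by omega))
  rw [pd_odd] at h1 h3
  have e1 := pd_even (b + 1) (by omega)
  have e2 := pd_even (b + 2) (by omega)
  obtain ⟨g, rfl | rfl⟩ := b.even_or_odd'
  · have := pd_odd g
    omega
  · have := pd_odd (g + 1)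
    rw [show 2 * (g + 1) + 1 = 2 * g + 1 + 2 by omega] at this
    omega

/-! ### Counting matching pairs -/

lemma sum_range_parity (f : ℕ → ℝ) (n : ℕ) :
    ∑ i ∈ Finset.range n, f i =
      ∑ a ∈ Finset.range ((n + 1) / 2), f (2 * a) + ∑ a ∈ Finset.range (n / 2), f (2 * a + 1) := by
  induction n with
  | zero => simp
  | succ n ih =>
    rw [Finset.sum_range_succ, ih]
    obtain ⟨k, rfl | rfl⟩ := n.even_or_odd'
    · rw [show (2 * k + 1 + 1) / 2 = k + 1 by omega, show (2 * k + 1) / 2 = k by omega,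
        show 2 * k / 2 = k by omega, Finset.sum_range_succ]
      ring
    · rw [show (2 * k + 1 + 1 + 1) / 2 = k + 1 by omega, show (2 * k + 1 + 1) / 2 = k + 1 by omega,
        show (2 * k + 1) / 2 = k by omega, Finset.sum_range_succ _ k, Finset.sum_range_succ _ k]
      ring

open Classical in
/-- The number of pairs in `[0, n)²` matching at length `m`, as a real number. -/
noncomputable def pairCount (n m : ℕ) : ℝ :=
  ∑ i ∈ Finset.range n, ∑ j ∈ Finset.range n, if Match i j m then (1 : ℝ) else 0

lemma corrSum_eq (n m : ℕ) : corrSum n m = pairCount n m / (n : ℝ) ^ 2 := by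
  classical
  unfold corrSum pairCount
  rw [Finset.card_filter, Finset.sum_product]
  push_cast
  congr 1
  refine Finset.sum_congr rfl fun i _ => Finset.sum_congr rfl fun j _ => ?_
  congr 1

open Classical in
lemma pairCount_split (n m : ℕ) :
    pairCount n m = pairCount ((n + 1) / 2) (m / 2) + pairCount (n / 2) ((m + 1) / 2) +
      2 * ∑ a ∈ Finset.range ((n + 1) / 2), ∑ b ∈ Finset.range (n / 2),
        if Match (2 * a) (2 * b + 1) m then (1 : ℝ) else 0 := by
  have hswap : ∑ a ∈ Finset.range (n / 2), ∑ b ∈ Finset.range ((n + 1) / 2),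
        (if Match (2 * a + 1) (2 * b) m then (1 : ℝ) else 0) =
      ∑ a ∈ Finset.range ((n + 1) / 2), ∑ b ∈ Finset.range (n / 2),
        if Match (2 * a) (2 * b + 1) m then (1 : ℝ) else 0 := by
    rw [Finset.sum_comm]
    simp only [match_symm (2 * _ + 1) (2 * _) m]
  unfold pairCount
  rw [sum_range_parity]
  simp only [sum_range_parity _ n, Finset.sum_add_distrib, match_even_even, match_odd_odd]
  rw [hswap]
  ring

lemma pairCount_of_three_le (n m : ℕ) (hm : 3 ≤ m) :
    pairCount n m = pairCount ((n + 1) / 2) (m / 2) + pairCount (n / 2) ((m + 1) / 2) := by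
  rw [pairCount_split]
  simp [not_match_even_odd _ _ m hm]

/-- The number of letters `1` among the first `n` letters of the sequence. -/
noncomputable def onesCount (n : ℕ) : ℝ := ∑ i ∈ Finset.range n, (pd (i + 1) : ℝ)

lemma pairCount_two (n : ℕ) :
    pairCount n 2 = pairCount ((n + 1) / 2) 1 + pairCount (n / 2) 1 +
      2 * (onesCount ((n + 1) / 2) * onesCount (n / 2)) := by
  classical
  rw [pairCount_split, show 2 / 2 = 1 from rfl]
  congr 2
  unfold onesCount
  rw [Finset.sum_mul_sum]
  refine Finset.sum_congr rfl fun a _ => Finset.sum_congr rfl fun b _ => ?_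
  rw [if_congr (match_even_odd_two a b) rfl rfl]
  have h1 := pd_le_one (a + 1)
  have h2 := pd_le_one (b + 1)
  interval_cases pd (a + 1) <;> interval_cases pd (b + 1) <;> simp

lemma pairCount_one (n : ℕ) :
    pairCount n 1 = (n : ℝ) ^ 2 - 2 * n * onesCount n + 2 * onesCount n ^ 2 := by
  classical
  have hterm : ∀ i j : ℕ, (if Match i j 1 then (1 : ℝ) else 0) =
      1 - (pd (i + 1) : ℝ) - pd (j + 1) + 2 * ((pd (i + 1) : ℝ) * pd (j + 1)) := by
    intro i j
    have : Match i j 1 ↔ pd (i + 1) = pd (j + 1) := by simp [Match]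
    rw [if_congr this rfl rfl]
    have h1 := pd_le_one (i + 1)
    have h2 := pd_le_one (j + 1)
    interval_cases pd (i + 1) <;> interval_cases pd (j + 1) <;> norm_num
  unfold pairCount
  simp only [hterm, Finset.sum_add_distrib, Finset.sum_sub_distrib, ← Finset.mul_sum,
    ← Finset.sum_mul, Finset.sum_const, Finset.card_range, nsmul_eq_mul]
  unfold onesCount
  ring

/-! ### Frequency of the letter `1` -/

lemma onesCount_halve (n : ℕ) : onesCount n = ((n / 2 : ℕ) : ℝ) - onesCount (n / 2) := by
  unfold onesCount
  rw [sum_range_parity]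
  simp only [pd_odd, Nat.cast_zero, Finset.sum_const_zero, zero_add]
  rw [eq_sub_iff_add_eq, ← Finset.sum_add_distrib]
  have : ∀ a : ℕ, (pd (2 * a + 1 + 1) : ℝ) + pd (a + 1) = 1 := by
    intro a
    exact_mod_cast pd_even (a + 1) (by omega)
  simp [this]

lemma onesCount_error (n : ℕ) : (onesCount n - n / 3) ^ 2 ≤ n := by
  induction n using Nat.strong_induction_on with
  | _ n ih =>
    rcases Nat.lt_or_ge n 2 with hn | hn
    · rw [onesCount_halve]
      interval_cases n <;> norm_num [onesCount]
    · have h := ih (n / 2) (by omega)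
      rw [onesCount_halve]
      have h1 : ((n / 2 : ℕ) : ℝ) * 2 ≤ n := by exact_mod_cast Nat.div_mul_le_self n 2
      have h2 : (n : ℝ) ≤ ((n / 2 : ℕ) : ℝ) * 2 + 1 := by
        exact_mod_cast (by omega : n ≤ n / 2 * 2 + 1)
      have hn' : (2 : ℝ) ≤ n := by exact_mod_cast hn
      set q : ℝ := ((n / 2 : ℕ) : ℝ)
      set e := onesCount (n / 2) - q / 3 with he
      -- The error satisfies `e(n) = δ - e(⌊n/2⌋)` with `|δ| ≤ 1/3`; then
      -- `(δ - e)² ≤ (4/3) e² + 4 δ²` absorbs the extra term.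
      have hd : q - onesCount (n / 2) - n / 3 = (2 * q - n) / 3 - e := by
        rw [he]
        ring
      rw [hd]
      have hδ : ((2 * q - n) / 3) ^ 2 ≤ 1 / 9 := by nlinarith
      nlinarith [sq_nonneg (3 * ((2 * q - n) / 3) + e)]

lemma tendsto_onesCount : Tendsto (fun n : ℕ => onesCount n / n) atTop (𝓝 (1 / 3)) := by
  have hsq : Tendsto (fun n : ℕ => (onesCount n / n - 1 / 3) ^ 2) atTop (𝓝 0) := by
    refine squeeze_zero' (Eventually.of_forall fun n => sq_nonneg _) ?_
      tendsto_one_div_atTop_nhds_zero_nat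
    filter_upwards [eventually_gt_atTop 0] with n hn
    have hn' : (0 : ℝ) < n := by exact_mod_cast hn
    have := onesCount_error n
    rw [show onesCount n / n - 1 / 3 = (onesCount n - n / 3) / n by field_simp, div_pow,
      div_le_div_iff₀ (by positivity) hn']
    nlinarith
  have habs : Tendsto (fun n : ℕ => |onesCount n / n - 1 / 3|) atTop (𝓝 0) := by
    have := hsq.sqrt
    simpa [Real.sqrt_sq_eq_abs] using this
  exact tendsto_sub_nhds_zero_iff.1 ((tendsto_zero_iff_abs_tendsto_zero _).2 habs)

/-! ### Limits of the correlation sums -/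

/-- The limits of the correlation sums, defined through the recursion that they satisfy. -/
noncomputable def limC (m : ℕ) : ℝ :=
  if m = 0 then 1 else if m = 1 then 5 / 9 else if h : m ≤ 2 then 1 / 3 else
    (limC (m / 2) + limC ((m + 1) / 2)) / 4
termination_by m
decreasing_by all_goals omega

lemma limC_one : limC 1 = 5 / 9 := by
  rw [limC]
  norm_num

lemma limC_two : limC 2 = 1 / 3 := by
  rw [limC]
  norm_num

lemma limC_rec (m : ℕ) (hm : 3 ≤ m) : limC m = (limC (m / 2) + limC ((m + 1) / 2)) / 4 := by
  rw [limC, if_neg (by omega), if_neg (by omega), dif_neg (by omega)]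

lemma tendsto_half_atTop : Tendsto (fun n : ℕ => n / 2) atTop atTop :=
  tendsto_atTop.2 fun b => by
    filter_upwards [eventually_ge_atTop (2 * b)] with n hn
    omega

lemma tendsto_half_up_atTop : Tendsto (fun n : ℕ => (n + 1) / 2) atTop atTop :=
  tendsto_half_atTop.comp (tendsto_add_atTop_nat 1)

lemma tendsto_half_div : Tendsto (fun n : ℕ => ((n / 2 : ℕ) : ℝ) / n) atTop (𝓝 (1 / 2)) := by
  have h0 := (tendsto_one_div_atTop_nhds_zero_nat (𝕜 := ℝ)).const_sub (1 / 2)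
  rw [sub_zero] at h0
  refine tendsto_of_tendsto_of_tendsto_of_le_of_le' h0 tendsto_const_nhds ?_ ?_
  all_goals
    filter_upwards [eventually_gt_atTop 0] with n hn
    have hn' : (0 : ℝ) < n := by exact_mod_cast hn
    have h1 : ((n / 2 : ℕ) : ℝ) * 2 ≤ n := by exact_mod_cast Nat.div_mul_le_self n 2
    have h2 : (n : ℝ) ≤ ((n / 2 : ℕ) : ℝ) * 2 + 1 := by
      exact_mod_cast (by omega : n ≤ n / 2 * 2 + 1)
  · rw [show (1 : ℝ) / 2 - 1 / n = (n / 2 - 1) / n by field_simp]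
    gcongr
    linarith
  · rw [div_le_iff₀ hn']
    linarith

lemma tendsto_half_up_div :
    Tendsto (fun n : ℕ => (((n + 1) / 2 : ℕ) : ℝ) / n) atTop (𝓝 (1 / 2)) := by
  have h := tendsto_half_div.const_sub 1
  rw [show (1 : ℝ) - 1 / 2 = 1 / 2 by norm_num] at h
  refine h.congr' ?_
  filter_upwards [eventually_gt_atTop 0] with n hn
  have hn' : (n : ℝ) ≠ 0 := by exact_mod_cast hn.ne'
  have : (((n + 1) / 2 : ℕ) : ℝ) + ((n / 2 : ℕ) : ℝ) = n := by
    exact_mod_cast (by omega : (n + 1) / 2 + n / 2 = n)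
  field_simp
  linarith

/-- Quadratic growth along a subsequence `g` of asymptotic density one half. -/
lemma tendsto_quadratic_comp {F : ℕ → ℝ} {L : ℝ} {g : ℕ → ℕ}
    (hF : Tendsto (fun n : ℕ => F n / (n : ℝ) ^ 2) atTop (𝓝 L)) (hg : Tendsto g atTop atTop)
    (hg' : Tendsto (fun n : ℕ => (g n : ℝ) / n) atTop (𝓝 (1 / 2))) :
    Tendsto (fun n : ℕ => F (g n) / (n : ℝ) ^ 2) atTop (𝓝 (L / 4)) := by
  have h := (hF.comp hg).mul (hg'.pow 2)
  rw [show L * (1 / 2) ^ 2 = L / 4 by ring] at h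
  refine h.congr' ?_
  filter_upwards [hg.eventually_gt_atTop 0] with n hn
  have hn' : (g n : ℝ) ≠ 0 := by exact_mod_cast hn.ne'
  simp only [Function.comp]
  field_simp

lemma tendsto_onesCount_comp {g : ℕ → ℕ} (hg : Tendsto g atTop atTop)
    (hg' : Tendsto (fun n : ℕ => (g n : ℝ) / n) atTop (𝓝 (1 / 2))) :
    Tendsto (fun n : ℕ => onesCount (g n) / n) atTop (𝓝 (1 / 6)) := by
  have h := (tendsto_onesCount.comp hg).mul hg'
  rw [show (1 / 3 : ℝ) * (1 / 2) = 1 / 6 by norm_num] at h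
  refine h.congr' ?_
  filter_upwards [hg.eventually_gt_atTop 0] with n hn
  have hn' : (g n : ℝ) ≠ 0 := by exact_mod_cast hn.ne'
  simp only [Function.comp]
  field_simp

lemma tendsto_pairCount_one :
    Tendsto (fun n : ℕ => pairCount n 1 / (n : ℝ) ^ 2) atTop (𝓝 (5 / 9)) := by
  have h := ((tendsto_onesCount.const_mul 2).const_sub 1).add ((tendsto_onesCount.pow 2).const_mul 2)
  rw [show (1 : ℝ) - 2 * (1 / 3) + 2 * (1 / 3) ^ 2 = 5 / 9 by norm_num] at h
  refine h.congr' ?_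
  filter_upwards [eventually_gt_atTop 0] with n hn
  have hn' : (n : ℝ) ≠ 0 := by exact_mod_cast hn.ne'
  rw [pairCount_one]
  field_simp

lemma tendsto_pairCount (m : ℕ) (hm : 1 ≤ m) :
    Tendsto (fun n : ℕ => pairCount n m / (n : ℝ) ^ 2) atTop (𝓝 (limC m)) := by
  induction m using Nat.strong_induction_on with
  | _ m ih =>
    obtain rfl | rfl | h3 : m = 1 ∨ m = 2 ∨ 3 ≤ m := by omega
    · rw [limC_one]
      exact tendsto_pairCount_one
    · have hu := tendsto_quadratic_comp tendsto_pairCount_one tendsto_half_up_atTop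
        tendsto_half_up_div
      have hd := tendsto_quadratic_comp tendsto_pairCount_one tendsto_half_atTop tendsto_half_div
      have hp := (tendsto_onesCount_comp tendsto_half_up_atTop tendsto_half_up_div).mul
        (tendsto_onesCount_comp tendsto_half_atTop tendsto_half_div)
      have h := (hu.add hd).add (hp.const_mul 2)
      rw [show (5 / 9 / 4 + 5 / 9 / 4 + 2 * (1 / 6 * (1 / 6)) : ℝ) = 1 / 3 by norm_num] at h
      rw [limC_two]
      refine h.congr fun n => ?_
      rw [pairCount_two]
      ring
    · have hu := tendsto_quadratic_comp (ih (m / 2) (by omega) (by omega)) tendsto_half_up_atTop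
        tendsto_half_up_div
      have hd := tendsto_quadratic_comp (ih ((m + 1) / 2) (by omega) (by omega))
        tendsto_half_atTop tendsto_half_div
      have h := hu.add hd
      rw [← add_div, ← limC_rec m h3] at h
      refine h.congr fun n => ?_
      rw [pairCount_of_three_le n m h3]
      ring

lemma tendsto_corrSum (m : ℕ) (hm : 1 ≤ m) :
    Tendsto (fun n => corrSum n m) atTop (𝓝 (limC m)) := by
  simpa only [corrSum_eq] using tendsto_pairCount m hm

/-! ### Slow variation of the limits -/

lemma limC_even (m : ℕ) (hm : 2 ≤ m) : limC (2 * m) = limC m / 2 := by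
  rw [limC_rec _ (by omega), show 2 * m / 2 = m by omega, show (2 * m + 1) / 2 = m by omega]
  ring

lemma limC_odd (m : ℕ) (hm : 1 ≤ m) : limC (2 * m + 1) = (limC m + limC (m + 1)) / 4 := by
  rw [limC_rec _ (by omega), show (2 * m + 1) / 2 = m by omega,
    show (2 * m + 1 + 1) / 2 = m + 1 by omega]

lemma limC_lower (m : ℕ) (hm : 1 ≤ m) : 1 / (2 * (m : ℝ)) ≤ limC m := by
  induction m using Nat.strong_induction_on with
  | _ m ih =>
    obtain rfl | rfl | h3 : m = 1 ∨ m = 2 ∨ 3 ≤ m := by omega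
    · rw [limC_one]
      norm_num
    · rw [limC_two]
      norm_num
    · obtain ⟨k, rfl | rfl⟩ := m.even_or_odd'
      · rw [limC_even k (by omega)]
        have := ih k (by omega) (by omega)
        calc 1 / (2 * ((2 * k : ℕ) : ℝ)) = 1 / (2 * (k : ℝ)) / 2 := by
              push_cast
              ring
          _ ≤ _ := by linarith
      · rw [limC_odd k (by omega)]
        have h1 := ih k (by omega) (by omega)
        have h2 := ih (k + 1) (by omega) (by omega)
        have hk : (0 : ℝ) < k := by exact_mod_cast (by omega : 0 < k)
        push_cast at h2 ⊢
        have : 1 / (2 * (2 * (k : ℝ) + 1)) ≤ (1 / (2 * (k : ℝ)) + 1 / (2 * ((k : ℝ) + 1))) / 4 := by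
          rw [div_add_div _ _ (by positivity) (by positivity), div_div,
            div_le_div_iff₀ (by positivity) (by positivity)]
          nlinarith
        linarith

lemma limC_pos (m : ℕ) (hm : 1 ≤ m) : 0 < limC m := by
  have hm' : (0 : ℝ) < m := by exact_mod_cast hm
  exact lt_of_lt_of_le (by positivity) (limC_lower m hm)

lemma limC_diff (m : ℕ) (hm : 1 ≤ m) : |limC m - limC (m + 1)| ≤ 1 / ((m : ℝ) + 1) ^ 2 := by
  induction m using Nat.strong_induction_on with
  | _ m ih =>
    have v3 : limC 3 = 2 / 9 := by
      rw [limC_odd 1 le_rfl, limC_one, limC_two]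
      norm_num
    have v4 : limC 4 = 1 / 6 := by
      rw [limC_even 2 le_rfl, limC_two]
      norm_num
    obtain rfl | rfl | rfl | h4 : m = 1 ∨ m = 2 ∨ m = 3 ∨ 4 ≤ m := by omega
    · norm_num [limC_one, limC_two, abs_le]
    · norm_num [limC_two, v3, abs_le]
    · norm_num [v3, v4, abs_le]
    · obtain ⟨k, rfl | rfl⟩ := m.even_or_odd'
      all_goals
        have h := ih k (by omega) (by omega)
        have hk : (0 : ℝ) < k := by exact_mod_cast (by omega : 0 < k)
        have h' : |(limC k - limC (k + 1)) / 4| ≤ 1 / (2 * (k : ℝ) + 2) ^ 2 := by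
          rw [abs_div, abs_of_pos (by norm_num : (0 : ℝ) < 4)]
          calc |limC k - limC (k + 1)| / 4 ≤ 1 / ((k : ℝ) + 1) ^ 2 / 4 := by linarith
            _ = _ := by
              field_simp
              ring
      · rw [limC_even k (by omega), limC_odd k (by omega),
          show limC k / 2 - (limC k + limC (k + 1)) / 4 = (limC k - limC (k + 1)) / 4 by ring]
        refine h'.trans ?_
        push_cast
        gcongr
        norm_num
      · rw [limC_odd k (by omega), show 2 * k + 1 + 1 = 2 * (k + 1) by ring,
          limC_even (k + 1) (by omega), show (limC k + limC (k + 1)) / 4 - limC (k + 1) / 2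
            = (limC k - limC (k + 1)) / 4 by ring]
        refine h'.trans (le_of_eq ?_)
        push_cast
        ring

lemma tendsto_limC_succ_ratio : Tendsto (fun m => limC (m + 1) / limC m) atTop (𝓝 1) := by
  rw [tendsto_iff_norm_sub_tendsto_zero]
  have h0 := (tendsto_one_div_atTop_nhds_zero_nat (𝕜 := ℝ)).const_mul 2
  rw [mul_zero] at h0
  refine squeeze_zero' (Eventually.of_forall fun _ => norm_nonneg _) ?_ h0
  filter_upwards [eventually_ge_atTop 1] with m hm
  have hm' : (0 : ℝ) < m := by exact_mod_cast hm
  have hp := limC_pos m hm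
  rw [Real.norm_eq_abs, div_sub_one hp.ne', abs_div, abs_of_pos hp, abs_sub_comm, div_le_iff₀ hp]
  refine (limC_diff m hm).trans ?_
  calc 1 / ((m : ℝ) + 1) ^ 2 ≤ 1 / (m : ℝ) ^ 2 := by
        gcongr
        linarith
    _ = 2 * (1 / (m : ℝ)) * (1 / (2 * m)) := by
        field_simp
    _ ≤ _ := by
        gcongr
        exact limC_lower m hm

lemma tendsto_limC_ratio (k : ℕ) : Tendsto (fun m => limC (m + k) / limC m) atTop (𝓝 1) := by
  induction k with
  | zero =>
    refine tendsto_const_nhds.congr' ?_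
    filter_upwards [eventually_ge_atTop 1] with m hm
    rw [add_zero, div_self (limC_pos m hm).ne']
  | succ k ih =>
    have h := (tendsto_limC_succ_ratio.comp (tendsto_add_atTop_nat k)).mul ih
    rw [one_mul] at h
    refine h.congr' ?_
    filter_upwards [eventually_ge_atTop 1] with m hm
    have := (limC_pos (m + k) (by omega)).ne'
    simp only [Function.comp, ← add_assoc]
    field_simp

theorem pd_determinism_tendsto_one (l : ℕ) (hl : 2 ≤ l) :
    ∃ RRl : ℕ → ℝ, ∃ RR1 : ℕ → ℝ,
      (∀ m, 1 ≤ m →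
        Tendsto
          (fun n => (l : ℝ) * corrSum n (m + l - 1) - ((l : ℝ) - 1) * corrSum n (m + l))
          atTop (𝓝 (RRl m)) ∧
        Tendsto (fun n => corrSum n m) atTop (𝓝 (RR1 m)) ∧ 0 < RR1 m) ∧
      Tendsto (fun m => RRl m / RR1 m) atTop (𝓝 1) := by
  refine ⟨fun m => (l : ℝ) * limC (m + l - 1) - ((l : ℝ) - 1) * limC (m + l), limC, ?_, ?_⟩
  · intro m hm
    exact ⟨((tendsto_corrSum _ (by omega)).const_mul _).sub
      ((tendsto_corrSum _ (by omega)).const_mul _), tendsto_corrSum m hm, limC_pos m hm⟩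
  · have h := ((tendsto_limC_ratio (l - 1)).const_mul (l : ℝ)).sub
      ((tendsto_limC_ratio l).const_mul ((l : ℝ) - 1))
    rw [show (l : ℝ) * 1 - ((l : ℝ) - 1) * 1 = 1 by ring] at h
    refine h.congr fun m => ?_
    rw [show m + (l - 1) = m + l - 1 by omega]
    ring
end

section
/- For every m ∈ ℕ, the complexity of the period-doubling sequence satisfies p(m+1) − p(m) ∈ {1, 2}. -/
/-!
Odd positions of the sequence carry the letter `0`, and `pd (2 * i) = 1 - pd i`. A word of length
`L` read from position `2 * i` is therefore equivalent to the word of length `(L + 1) / 2` read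
from `i`, and a word of length `L` read from `2 * i - 1` is equivalent to the word of length
`L / 2` read from `i`. For `L ≥ 3` no word occurs both at an even and at an odd position, since
that would force `pd i = pd (i + 1) = 1`, although one of `i`, `i + 1` is odd. Hence
`p L = p ((L + 1) / 2) + p (L / 2)` for `L ≥ 3` (`pdComplexity_rec`), so the difference
`s L = p (L + 1) - p L` satisfies `s L = s (L / 2)` for `L ≥ 3`. Together with `p 1 = 2` and
`p 2 = 3`, which give `s 1 = 1` and `s 2 = 2`, strong induction concludes.
-/

open Filter Topology

lemma pd_lt_two (i : ℕ) : pd i < 2 := Nat.mod_lt _ (by norm_num)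

lemma pd_odd_s18 {i : ℕ} (h : i % 2 = 1) : pd i = 0 := by
  unfold pd
  rw [padicValNat.eq_zero_of_not_dvd (by omega)]

lemma pd_two_mul {i : ℕ} (h : 1 ≤ i) : pd (2 * i) = 1 - pd i := by
  unfold pd
  rw [padicValNat.mul (by norm_num) (by omega), padicValNat_self]
  omega

lemma pd_two_mul_eq_iff {i j : ℕ} (hi : 1 ≤ i) (hj : 1 ≤ j) :
    pd (2 * i) = pd (2 * j) ↔ pd i = pd j := by
  rw [pd_two_mul hi, pd_two_mul hj]
  have := pd_lt_two i
  have := pd_lt_two j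
  omega

lemma wordAt_eq_iff (i j m : ℕ) :
    wordAt i m = wordAt j m ↔ ∀ h < m, pd (i + h) = pd (j + h) := by
  simp [wordAt]

lemma wordAt_even_eq_iff {i j : ℕ} (hi : 1 ≤ i) (hj : 1 ≤ j) (L : ℕ) :
    wordAt (2 * i) L = wordAt (2 * j) L ↔ wordAt i ((L + 1) / 2) = wordAt j ((L + 1) / 2) := by
  rw [wordAt_eq_iff, wordAt_eq_iff]
  constructor
  · intro H t ht
    have := H (2 * t) (by omega)
    rwa [← mul_add, ← mul_add, pd_two_mul_eq_iff (by omega) (by omega)] at this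
  · intro H h hh
    obtain ⟨t, rfl | rfl⟩ := Nat.even_or_odd' h
    · rw [← mul_add, ← mul_add, pd_two_mul_eq_iff (by omega) (by omega)]
      exact H t (by omega)
    · rw [pd_odd_s18 (by omega), pd_odd_s18 (by omega)]

lemma wordAt_odd_eq_iff {i j : ℕ} (hi : 1 ≤ i) (hj : 1 ≤ j) (L : ℕ) :
    wordAt (2 * i - 1) L = wordAt (2 * j - 1) L ↔ wordAt i (L / 2) = wordAt j (L / 2) := by
  have key : ∀ k t : ℕ, 1 ≤ k → 2 * k - 1 + (2 * t + 1) = 2 * (k + t) := by intros; omega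
  rw [wordAt_eq_iff, wordAt_eq_iff]
  constructor
  · intro H t ht
    have := H (2 * t + 1) (by omega)
    rwa [key i t hi, key j t hj, pd_two_mul_eq_iff (by omega) (by omega)] at this
  · intro H h hh
    obtain ⟨t, rfl | rfl⟩ := Nat.even_or_odd' h
    · rw [pd_odd_s18 (by omega), pd_odd_s18 (by omega)]
    · rw [key i t hi, key j t hj, pd_two_mul_eq_iff (by omega) (by omega)]
      exact H t (by omega)

lemma wordAt_even_ne_odd {i j L : ℕ} (hi : 1 ≤ i) (hj : 1 ≤ j) (hL : 3 ≤ L) :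
    wordAt (2 * i) L ≠ wordAt (2 * j - 1) L := by
  rw [Ne, wordAt_eq_iff]
  intro H
  have h0 := H 0 (by omega)
  have h2 := H 2 (by omega)
  rw [pd_odd_s18 (i := 2 * j - 1 + 0) (by omega), add_zero, pd_two_mul hi] at h0
  rw [pd_odd_s18 (i := 2 * j - 1 + 2) (by omega), show 2 * i + 2 = 2 * (i + 1) by ring,
    pd_two_mul (by omega)] at h2
  rcases Nat.mod_two_eq_zero_or_one i with h | h
  · rw [pd_odd_s18 (i := i + 1) (by omega)] at h2
    omega
  · rw [pd_odd_s18 h] at h0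
    omega

/-- Two maps identifying the same pairs of points of `S` have equally large images. -/
lemma ncard_image_eq_of_iff {α β γ : Type*} {S : Set α} (f : α → β) (g : α → γ)
    (h : ∀ i ∈ S, ∀ j ∈ S, f i = f j ↔ g i = g j) : (f '' S).ncard = (g '' S).ncard := by
  rcases S.eq_empty_or_nonempty with rfl | ⟨i₀, -⟩
  · simp
  have : Nonempty α := ⟨i₀⟩
  choose! e he using fun b (hb : b ∈ f '' S) => hb
  refine Set.ncard_congr (fun b _ => g (e b)) (fun b hb => ⟨e b, (he b hb).1, rfl⟩) ?_ ?_
  · intro b c hb hc hbc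
    rw [← (he b hb).2, ← (he c hc).2]
    exact (h _ (he b hb).1 _ (he c hc).1).2 hbc
  · rintro _ ⟨i, hi, rfl⟩
    have hb : f i ∈ f '' S := ⟨i, hi, rfl⟩
    exact ⟨f i, hb, (h _ (he _ hb).1 _ hi).1 (he _ hb).2⟩

lemma allowed_eq_image (m : ℕ) : {v | Allowed m v} = (fun i => wordAt i m) '' Set.Ici 1 := rfl

lemma finite_allowed (m : ℕ) : {v | Allowed m v}.Finite := by
  refine (Set.finite_range
    (fun g : Fin m → Fin 2 => List.ofFn (fun h => (g h : ℕ)))).subset ?_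
  rintro _ ⟨i, -, rfl⟩
  refine ⟨fun h => ⟨pd (i + h), pd_lt_two _⟩, ?_⟩
  apply List.ext_getElem <;> simp [wordAt]

lemma pdComplexity_rec {L : ℕ} (hL : 3 ≤ L) :
    pdComplexity L = pdComplexity ((L + 1) / 2) + pdComplexity (L / 2) := by
  have hU : {v | Allowed L v} = (fun i => wordAt (2 * i) L) '' Set.Ici 1 ∪
      (fun i => wordAt (2 * i - 1) L) '' Set.Ici 1 := by
    ext v
    constructor
    · rintro ⟨i, hi, rfl⟩
      obtain ⟨t, rfl | rfl⟩ := Nat.even_or_odd' i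
      · exact Or.inl ⟨t, by simp only [Set.mem_Ici]; omega, rfl⟩
      · exact Or.inr ⟨t + 1, by simp, rfl⟩
    · rintro (⟨i, hi, rfl⟩ | ⟨i, hi, rfl⟩) <;> rw [Set.mem_Ici] at hi
      · exact ⟨2 * i, by omega, rfl⟩
      · exact ⟨2 * i - 1, by omega, rfl⟩
  have hfin := finite_allowed L
  rw [hU] at hfin
  unfold pdComplexity
  rw [hU, Set.ncard_union_eq ?_ (hfin.subset Set.subset_union_left)
    (hfin.subset Set.subset_union_right), allowed_eq_image, allowed_eq_image]
  · congr 1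
    · exact ncard_image_eq_of_iff _ _ fun i hi j hj => wordAt_even_eq_iff hi hj L
    · exact ncard_image_eq_of_iff _ _ fun i hi j hj => wordAt_odd_eq_iff hi hj L
  · rw [Set.disjoint_left]
    rintro _ ⟨i, hi, rfl⟩ ⟨j, hj, hij⟩
    exact wordAt_even_ne_odd hi hj hL hij.symm

lemma pd_one : pd 1 = 0 := pd_odd_s18 rfl

lemma pd_two : pd 2 = 1 := by
  rw [show 2 = 2 * 1 from rfl, pd_two_mul le_rfl, pd_one]

lemma pd_three : pd 3 = 0 := pd_odd_s18 rfl

lemma pd_four : pd 4 = 0 := by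
  rw [show 4 = 2 * 2 from rfl, pd_two_mul (by norm_num), pd_two]

lemma pdComplexity_one : pdComplexity 1 = 2 := by
  have : {v | Allowed 1 v} = {[0], [1]} := by
    ext v
    simp only [Set.mem_ofPred_eq, Set.mem_insert_iff, Set.mem_singleton_iff]
    constructor
    · rintro ⟨i, -, rfl⟩
      have := pd_lt_two i
      simp [wordAt]
      omega
    · rintro (rfl | rfl)
      · exact ⟨1, by simp [wordAt, pd_one]⟩
      · exact ⟨2, by simp [wordAt, pd_two]⟩
  rw [pdComplexity, this, Set.ncard_pair (by simp)]

lemma pdComplexity_two : pdComplexity 2 = 3 := by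
  have : {v | Allowed 2 v} = {[0, 0], [0, 1], [1, 0]} := by
    ext v
    simp only [Set.mem_ofPred_eq, Set.mem_insert_iff, Set.mem_singleton_iff]
    constructor
    · rintro ⟨i, -, rfl⟩
      have h1 := pd_lt_two i
      have h2 := pd_lt_two (i + 1)
      have h3 : pd i = 0 ∨ pd (i + 1) = 0 := by
        rcases Nat.mod_two_eq_zero_or_one i with h | h
        · exact Or.inr (pd_odd_s18 (by omega))
        · exact Or.inl (pd_odd_s18 h)
      simp [wordAt, List.range_succ]
      omega
    · rintro (rfl | rfl | rfl)
      · exact ⟨3, by simp [wordAt, List.range_succ, pd_three, pd_four]⟩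
      · exact ⟨1, by simp [wordAt, List.range_succ, pd_one, pd_two]⟩
      · exact ⟨2, by simp [wordAt, List.range_succ, pd_two, pd_three]⟩
  rw [pdComplexity, this, Set.ncard_eq_toFinset_card']
  rfl

/-- The additive form of the claim, in which no truncated subtraction occurs. -/
lemma pdComplexity_succ (m : ℕ) (hm : 1 ≤ m) :
    pdComplexity (m + 1) = pdComplexity m + 1 ∨ pdComplexity (m + 1) = pdComplexity m + 2 := by
  induction m using Nat.strong_induction_on with
  | _ m ih =>
    by_cases h1 : m = 1
    · subst h1
      exact Or.inl (by rw [pdComplexity_one, pdComplexity_two])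
    by_cases h2 : m = 2
    · subst h2
      right
      rw [pdComplexity_rec (L := 2 + 1) (by norm_num)]
      norm_num [pdComplexity_one, pdComplexity_two]
    rw [pdComplexity_rec (L := m + 1) (by omega), pdComplexity_rec (L := m) (by omega),
      show (m + 1 + 1) / 2 = m / 2 + 1 by omega]
    have := ih (m / 2) (by omega) (by omega)
    omega

theorem pd_complexity_difference (m : ℕ) (hm : 1 ≤ m) :
    pdComplexity (m + 1) - pdComplexity m = 1 ∨
    pdComplexity (m + 1) - pdComplexity m = 2 := by
  have := pdComplexity_succ m hm
  omega
end
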